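/- arXiv:2508.15153 — 2 statements merged into one kernel-verified Lean document; each statement's English description precedes it below -/
import Mathlib

section
/- Fix an integer m ≥ 1 and for natural numbers u, v ≥ 1 let C_{u,v}(m) denote the number of semi-mixed support pairs (I_u, I_v) in ℤ/mℤ with |I_u| = u and |I_v| = v. Then for all u ≥ 2 and v ≥ 2, C_{u,v}(m) = C_{u+1,v−1}(m). -/
/-- The arc `{i, i+1, …, i+ℓ}` in `ℤ/mℤ`. -/
def Arc (m : ℕ) (i : ZMod m) (ℓ : ℕ) : Finset (ZMod m) :=
  (Finset.range (ℓ + 1)).image fun t : ℕ => i + (t : ZMod m)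

/-- A pair `(I_u, I_v)` of nonempty subsets of `ℤ/mℤ` is a semi-mixed support pair if
there are `i ∈ ℤ/mℤ` and `0 ≤ ℓ ≤ m−1` with `I_u ⊆ Arc(i,ℓ)` and
`I_v ∩ Arc(i,ℓ−1) = ∅` (where `Arc(i,ℓ−1)` is the empty set if `ℓ = 0`). -/
def IsSemiMixedPair (m : ℕ) (Iu Iv : Finset (ZMod m)) : Prop :=
  Iu.Nonempty ∧ Iv.Nonempty ∧
    ∃ (i : ZMod m) (ℓ : ℕ), ℓ ≤ m - 1 ∧ Iu ⊆ Arc m i ℓ ∧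
      Iv ∩ (if ℓ = 0 then (∅ : Finset (ZMod m)) else Arc m i (ℓ - 1)) = ∅

/-- `C_{u,v}(m)`: the number of semi-mixed support pairs `(I_u, I_v)` in `ℤ/mℤ`
with `|I_u| = u` and `|I_v| = v`. -/
noncomputable def semiMixedCount (m u v : ℕ) : ℕ :=
  Set.ncard {p : Finset (ZMod m) × Finset (ZMod m) |
    IsSemiMixedPair m p.1 p.2 ∧ p.1.card = u ∧ p.2.card = v}

/-!
Seen from a point `p` of `I_u`, a pair is semi-mixed when no point of `I_v` comes strictly before a
point of `I_u`, and at most one `p` has this property. Fixing `p`, remove it from `I_u` and shift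
the rest of `I_u` back by one: the weak inequalities between `I_u` and `I_v` become strict, so the
two sets are recovered from their union, which is an arbitrary set of `u + v - 1` points. Hence
`C_{u,v}(m) = m * (m choose (u + v - 1))`, which depends on `u + v` alone.
-/

open scoped Finset

section SeparatedPairs

variable {α : Type*}

lemma subset_or_subset_of_union_eq_union [Preorder α] [DecidableEq α] {A B C D : Finset α}
    (hunion : A ∪ B = C ∪ D) (hAB : ∀ x ∈ A, ∀ y ∈ B, x < y) (hCD : ∀ x ∈ C, ∀ y ∈ D, x < y) :
    A ⊆ C ∨ C ⊆ A := by
  by_contra! ⟨hAC, hCA⟩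
  obtain ⟨x, hxA, hxC⟩ := Finset.not_subset.1 hAC
  obtain ⟨y, hyC, hyA⟩ := Finset.not_subset.1 hCA
  have hxD : x ∈ D :=
    (Finset.mem_union.1 (hunion ▸ Finset.mem_union_left B hxA)).resolve_left hxC
  have hyB : y ∈ B :=
    (Finset.mem_union.1 (hunion ▸ Finset.mem_union_left D hyC)).resolve_left hyA
  exact lt_asymm (hAB x hxA y hyB) (hCD y hyC x hxD)

variable [LinearOrder α]

lemma exists_union_eq_of_card_eq_add {S : Finset α} {a b : ℕ} (hS : #S = a + b) :
    ∃ A B : Finset α, #A = a ∧ #B = b ∧ (∀ x ∈ A, ∀ y ∈ B, x < y) ∧ A ∪ B = S := by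
  let e := S.orderEmbOfFin hS
  refine ⟨Finset.univ.map ((Fin.castAddEmb b).trans e.toEmbedding),
    Finset.univ.map ((Fin.natAddEmb a).trans e.toEmbedding), by simp, by simp, ?_, ?_⟩
  · simp only [Finset.mem_map, Finset.mem_univ, true_and]
    rintro _ ⟨i, rfl⟩ _ ⟨j, rfl⟩
    exact e.strictMono (Fin.lt_def.2 (i.isLt.trans_le (Nat.le_add_right a j)))
  · ext x
    simp only [Finset.mem_union, Finset.mem_map, Finset.mem_univ, true_and]
    constructor
    · rintro (⟨i, rfl⟩ | ⟨j, rfl⟩) <;> exact S.orderEmbOfFin_mem hS _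
    · intro hx
      obtain ⟨k, rfl⟩ : x ∈ Set.range e := by rwa [S.range_orderEmbOfFin hS]
      induction k using Fin.addCases with
      | left i => exact .inl ⟨i, rfl⟩
      | right j => exact .inr ⟨j, rfl⟩

theorem ncard_forall_lt_eq_choose [Fintype α] (a b : ℕ) :
    {q : Finset α × Finset α | #q.1 = a ∧ #q.2 = b ∧ ∀ x ∈ q.1, ∀ y ∈ q.2, x < y}.ncard =
      (Fintype.card α).choose (a + b) := by
  have disjoint_of_lt {A B : Finset α} (h : ∀ x ∈ A, ∀ y ∈ B, x < y) : Disjoint A B :=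
    Finset.disjoint_left.2 fun x hA hB ↦ lt_irrefl x (h x hA x hB)
  rw [← Finset.card_univ, ← Finset.card_powersetCard, ← Set.ncard_coe_finset]
  refine Set.BijOn.ncard_eq (f := fun q ↦ q.1 ∪ q.2) ⟨?mapsTo, ?injOn, ?surjOn⟩
  case mapsTo =>
    rintro ⟨A, B⟩ ⟨hA, hB, hlt⟩
    simp [Finset.card_union_of_disjoint (disjoint_of_lt hlt), hA, hB]
  case injOn =>
    rintro ⟨A, B⟩ ⟨hA, -, hAB⟩ ⟨C, D⟩ ⟨hC, -, hCD⟩ (hunion : A ∪ B = C ∪ D)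
    have hcard : #A = #C := hA.trans hC.symm
    have hAC : A = C := by
      rcases subset_or_subset_of_union_eq_union hunion hAB hCD with h | h
      · exact Finset.eq_of_subset_of_card_le h hcard.ge
      · exact (Finset.eq_of_subset_of_card_le h hcard.le).symm
    have hBD : B = D :=
      calc B = (A ∪ B) \ A := (Finset.union_sdiff_cancel_left (disjoint_of_lt hAB)).symm
        _ = (C ∪ D) \ C := by rw [hunion, hAC]
        _ = D := Finset.union_sdiff_cancel_left (disjoint_of_lt hCD)
    rw [hAC, hBD]
  case surjOn =>
    intro S hS
    obtain ⟨A, B, hA, hB, hlt, rfl⟩ :=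
      exists_union_eq_of_card_eq_add (Finset.mem_powersetCard_univ.1 hS)
    exact ⟨(A, B), ⟨hA, hB, hlt⟩, rfl⟩

end SeparatedPairs

/-- `p` is a start of the pair `(I_u, I_v)`: it lies in `I_u`, and on going once around `ℤ/mℤ` from
`p` no point of `I_v` is met strictly before a point of `I_u`. The position of `x` on this walk is
`(x - p).val`. -/
def IsSemiMixedStart {m : ℕ} (p : ZMod m) (Iu Iv : Finset (ZMod m)) : Prop :=
  p ∈ Iu ∧ ∀ x ∈ Iu, ∀ y ∈ Iv, (x - p).val ≤ (y - p).val

/-- The pair obtained from `(I_u, I_v)` with start `p` by removing `p` from `I_u` and moving the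
other points of `I_u` back by one, which makes the comparison of `I_u` with `I_v` strict. -/
def dropStart {m : ℕ} (p : ZMod m) (I : Finset (ZMod m) × Finset (ZMod m)) :
    Finset (ZMod m) × Finset (ZMod m) :=
  ((I.1.erase p).map (Equiv.subRight 1).toEmbedding, I.2)

lemma injOn_dropStart {m : ℕ} (p : ZMod m) : Set.InjOn (dropStart p) {I | p ∈ I.1} := by
  rintro ⟨A, B⟩ (hA : p ∈ A) ⟨C, D⟩ (hC : p ∈ C) h
  obtain ⟨hAC, hBD⟩ : A.erase p = C.erase p ∧ B = D := by
    simpa only [dropStart, Prod.mk.injEq, Finset.map_inj] using h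
  rw [← Finset.insert_erase hA, hAC, Finset.insert_erase hC, hBD]

section Cyclic

variable {m : ℕ} [NeZero m] {p q x y : ZMod m} {Iu Iv : Finset (ZMod m)}

lemma val_sub_eq_val_sub_sub_val_sub (h : (q - p).val ≤ (x - p).val) :
    (x - q).val = (x - p).val - (q - p).val := by
  rw [← ZMod.val_sub h, sub_sub_sub_cancel_right]

lemma val_add_one_of_val_lt_val (h : x.val < y.val) : (x + 1).val = x.val + 1 := by
  have hlt : x.val + 1 < m := by have := y.val_lt; omega
  rw [← ZMod.val_natCast_of_lt hlt, Nat.cast_add, ZMod.natCast_zmod_val, Nat.cast_one]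

lemma val_sub_one_add_one (hx : x ≠ 0) : (x - 1).val + 1 = x.val := by
  have hpos : 0 < x.val := ZMod.val_pos.2 hx
  have hpred : x - 1 = ((x.val - 1 : ℕ) : ZMod m) := by
    rw [Nat.cast_pred hpos, ZMod.natCast_zmod_val]
  rw [hpred, ZMod.val_natCast_of_lt (by have := x.val_lt; omega), Nat.sub_add_cancel hpos]

lemma mem_Arc_iff (i : ZMod m) {l : ℕ} (hl : l < m) : x ∈ Arc m i l ↔ (x - i).val ≤ l := by
  simp only [Arc, Finset.mem_image, Finset.mem_range, Nat.lt_succ_iff]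
  constructor
  · rintro ⟨t, ht, rfl⟩
    rwa [add_sub_cancel_left, ZMod.val_natCast_of_lt (by omega)]
  · intro h
    exact ⟨(x - i).val, h, by rw [ZMod.natCast_zmod_val, add_sub_cancel]⟩

lemma inter_Arc_pred_eq_empty_iff (i : ZMod m) {l : ℕ} (hl : l < m) :
    Iv ∩ (if l = 0 then ∅ else Arc m i (l - 1)) = ∅ ↔ ∀ y ∈ Iv, l ≤ (y - i).val := by
  split_ifs with h0
  · simp [h0]
  · simp only [Finset.eq_empty_iff_forall_notMem, Finset.mem_inter, not_and,
      mem_Arc_iff i (l := l - 1) (by omega)]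
    exact forall₂_congr fun y _ ↦ by omega

theorem isSemiMixedPair_iff_exists_isSemiMixedStart :
    IsSemiMixedPair m Iu Iv ↔ Iv.Nonempty ∧ ∃ p, IsSemiMixedStart p Iu Iv := by
  have hm : 0 < m := NeZero.pos m
  constructor
  · rintro ⟨hu, hv, i, l, hl, hIu, hIv⟩
    have hl' : l < m := by omega
    rw [inter_Arc_pred_eq_empty_iff i hl'] at hIv
    obtain ⟨p, hp, hmin⟩ := Finset.exists_min_image Iu (fun x ↦ (x - i).val) hu
    refine ⟨hv, p, hp, fun x hx y hy ↦ ?_⟩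
    have hxy : (x - i).val ≤ (y - i).val := ((mem_Arc_iff i hl').1 (hIu hx)).trans (hIv y hy)
    rw [val_sub_eq_val_sub_sub_val_sub (hmin x hx),
      val_sub_eq_val_sub_sub_val_sub ((hmin x hx).trans hxy)]
    exact Nat.sub_le_sub_right hxy _
  · rintro ⟨hv, p, hp, hle⟩
    obtain ⟨q, hq, hmax⟩ := Finset.exists_max_image Iu (fun x ↦ (x - p).val) ⟨p, hp⟩
    have hlt : (q - p).val < m := ZMod.val_lt _
    exact ⟨⟨p, hp⟩, hv, p, (q - p).val, by omega,
      fun x hx ↦ (mem_Arc_iff p hlt).2 (hmax x hx),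
      (inter_Arc_pred_eq_empty_iff p hlt).2 (hle q hq)⟩

theorem IsSemiMixedStart.unique (hv : Iv.Nonempty) (hp : IsSemiMixedStart p Iu Iv)
    (hq : IsSemiMixedStart q Iu Iv) : p = q := by
  obtain ⟨y, hy⟩ := hv
  have hqy : (q - p).val ≤ (y - p).val := hp.2 q hq.1 y hy
  have hpy : (p - q).val ≤ (y - q).val := hq.2 p hp.1 y hy
  have hyq := val_sub_eq_val_sub_sub_val_sub hqy
  have hyp := val_sub_eq_val_sub_sub_val_sub hpy
  have hzero : (q - p).val = 0 := by omega
  exact (sub_eq_zero.1 ((ZMod.val_eq_zero _).1 hzero)).symm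

lemma bijOn_dropStart (p : ZMod m) (a b : ℕ) :
    Set.BijOn (dropStart p)
      {I | IsSemiMixedStart p I.1 I.2 ∧ #I.1 = a + 1 ∧ #I.2 = b + 1}
      {I | #I.1 = a ∧ #I.2 = b + 1 ∧ ∀ x ∈ I.1, ∀ y ∈ I.2, (x - p).val < (y - p).val} := by
  refine ⟨?mapsTo, (injOn_dropStart p).mono fun I hI ↦ hI.1.1, ?surjOn⟩
  case mapsTo =>
    rintro ⟨Iu, Iv⟩ ⟨⟨hp, hle⟩, hu, hv⟩
    refine ⟨?_, hv, fun x hx y hy ↦ ?_⟩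
    · rw [dropStart, Finset.card_map, Finset.card_erase_of_mem hp, hu, Nat.add_sub_cancel]
    · obtain ⟨z, hz, rfl⟩ := Finset.mem_map.1 hx
      obtain ⟨hzp, hzu⟩ := Finset.mem_erase.1 hz
      calc (z - 1 - p).val < (z - 1 - p).val + 1 := Nat.lt_succ_self _
        _ = (z - p).val := by rw [sub_right_comm, val_sub_one_add_one (sub_ne_zero.2 hzp)]
        _ ≤ (y - p).val := hle z hzu y hy
  case surjOn =>
    rintro ⟨A, B⟩ ⟨hA, hB, hlt⟩
    obtain ⟨y₀, hy₀⟩ : B.Nonempty := Finset.card_pos.1 (by simp [hB])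
    -- A point of `B` lies ahead of every `x ∈ A`, so `x + 1` does not wrap around to `p`.
    have hsucc : ∀ x ∈ A, (x + 1 - p).val = (x - p).val + 1 := fun x hx ↦ by
      rw [add_sub_right_comm, val_add_one_of_val_lt_val (hlt x hx y₀ hy₀)]
    let A' := A.map (Equiv.addRight 1).toEmbedding
    have hpA' : p ∉ A' := fun hp ↦ by
      obtain ⟨x, hx, hxp : x + 1 = p⟩ := Finset.mem_map.1 hp
      have := hsucc x hx
      simp [hxp] at this
    refine ⟨(insert p A', B), ⟨⟨Finset.mem_insert_self p A', fun x hx y hy ↦ ?_⟩, ?_, hB⟩, ?_⟩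
    · obtain rfl | hx := Finset.mem_insert.1 hx
      · simp
      · obtain ⟨z, hz, rfl⟩ := Finset.mem_map.1 hx
        exact (hsucc z hz).trans_le (hlt z hz y hy)
    · rw [Finset.card_insert_of_notMem hpA', Finset.card_map, hA]
    · rw [dropStart, Finset.erase_insert hpA']
      exact Prod.ext ((Equiv.subRight (1 : ZMod m)).finsetCongr.apply_symm_apply A) rfl

theorem ncard_isSemiMixedStart (p : ZMod m) (a b : ℕ) :
    {I : Finset (ZMod m) × Finset (ZMod m) |
      IsSemiMixedStart p I.1 I.2 ∧ #I.1 = a + 1 ∧ #I.2 = b + 1}.ncard =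
      m.choose (a + b + 1) := by
  let : LinearOrder (ZMod m) := LinearOrder.lift' (fun x ↦ (x - p).val)
    ((ZMod.val_injective m).comp sub_left_injective)
  rw [(bijOn_dropStart p a b).ncard_eq, add_assoc]
  exact (ncard_forall_lt_eq_choose a (b + 1)).trans (by rw [ZMod.card])

end Cyclic

theorem semiMixedCount_add_one_add_one (m a b : ℕ) [NeZero m] :
    semiMixedCount m (a + 1) (b + 1) = m * m.choose (a + b + 1) := by
  let pairsStartingAt (p : ZMod m) : Set (Finset (ZMod m) × Finset (ZMod m)) :=
    {I | IsSemiMixedStart p I.1 I.2 ∧ #I.1 = a + 1 ∧ #I.2 = b + 1}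
  have hdisjoint : Pairwise (Function.onFun Disjoint pairsStartingAt) := fun p q hpq ↦
    Set.disjoint_left.2 fun I hp hq ↦
      hpq (hp.1.unique (Finset.card_pos.1 (by simp [hp.2.2])) hq.1)
  have hunion : {I : Finset (ZMod m) × Finset (ZMod m) |
      IsSemiMixedPair m I.1 I.2 ∧ #I.1 = a + 1 ∧ #I.2 = b + 1} = ⋃ p, pairsStartingAt p := by
    ext ⟨Iu, Iv⟩
    simp only [isSemiMixedPair_iff_exists_isSemiMixedStart, pairsStartingAt, Set.mem_iUnion,
      Set.mem_ofPred_eq, exists_and_right]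
    exact and_congr_left fun h ↦ and_iff_right (Finset.card_pos.1 (by simp [h.2]))
  rw [semiMixedCount, hunion, Set.ncard_iUnion_of_finite (fun p ↦ Set.toFinite _) hdisjoint,
    finsum_eq_sum_of_fintype]
  simp [pairsStartingAt, ncard_isSemiMixedStart, ZMod.card]

theorem semiMixedCount_symm_general {m u v u' v' : ℕ} [NeZero m] (hu : 0 < u) (hv : 0 < v)
    (hu' : 0 < u') (hv' : 0 < v') (h : u + v = u' + v') :
    semiMixedCount m u v = semiMixedCount m u' v' := by
  obtain ⟨a, rfl⟩ := Nat.exists_eq_add_one.2 hu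
  obtain ⟨b, rfl⟩ := Nat.exists_eq_add_one.2 hv
  obtain ⟨a', rfl⟩ := Nat.exists_eq_add_one.2 hu'
  obtain ⟨b', rfl⟩ := Nat.exists_eq_add_one.2 hv'
  have hab : a + b = a' + b' := by omega
  rw [semiMixedCount_add_one_add_one, semiMixedCount_add_one_add_one, hab]

/-- Symmetry of the semi-mixed counts: for `u, v ≥ 2`, `C_{u,v}(m) = C_{u+1,v−1}(m)`. -/
theorem semiMixedCount_symm (m u v : ℕ) (hm : 1 ≤ m) (hu : 2 ≤ u) (hv : 2 ≤ v) :
    semiMixedCount m u v = semiMixedCount m (u + 1) (v - 1) := by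
  have : NeZero m := ⟨by omega⟩
  exact semiMixedCount_symm_general (by omega) (by omega) (by omega) (by omega) (by omega)
end

section
/- Fix an integer m ≥ 2. Then the signed count of all semi-mixed support pairs in ℤ/mℤ vanishes: ∑_{(I_u, I_v) semi-mixed} (−1)^{|I_u| + |I_v|} = 0; equivalently, ∑_{u ≥ 1, v ≥ 1} (−1)^{u+v}·C_{u,v}(m) = 0, where C_{u,v}(m) is the number of semi-mixed support pairs with |I_u| = u and |I_v| = v. -/
/-!
Call `x ∈ A` a pivot of `(A, B)` if, going around the cycle from `x`, all of `B \ {x}` comes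
before `A \ {x}`. A pair of nonempty sets is semi-mixed exactly when it has a pivot, namely the
last element of `A` along the arc, and the pivot is unique because a strict cyclic order is
asymmetric. The signed count may therefore be taken one pivot `x` at a time. For fixed `x` and
`A ∋ x`, the possible `B` are the nonempty subsets of a set containing `x`, so they contribute
`-1` whatever `A` is; and the signed count of the sets `A` containing `x` vanishes as soon as
the cycle has a second point.
-/

theorem finsum_mem_fiberwise_of_mapsTo {α ι M : Type*} [AddCommMonoid M] {s : Set α} {t : Set ι}
    {k : α → ι} (hs : s.Finite) (hk : Set.MapsTo k s t) (f : α → M) :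
    ∑ᶠ i ∈ t, ∑ᶠ a ∈ {a ∈ s | k a = i}, f a = ∑ᶠ a ∈ s, f a := by
  have hunion : ⋃ i ∈ k '' s, {a ∈ s | k a = i} = s := by
    ext a
    simpa using fun ha => ⟨a, ha, rfl⟩
  have hdisj : (k '' s).PairwiseDisjoint fun i => {a ∈ s | k a = i} := fun i _ j _ hij =>
    Set.disjoint_left.2 fun a hi hj => hij (hi.2.symm.trans hj.2)
  conv_rhs => rw [← hunion]
  rw [finsum_mem_biUnion hdisj (hs.image k) fun i _ => hs.sep _]
  refine finsum_mem_inter_support_eq' _ _ _ fun i hi => ?_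
  obtain ⟨a, ⟨ha, rfl⟩, -⟩ := exists_ne_zero_of_finsum_mem_ne_zero hi
  exact iff_of_true (hk ha) ⟨a, ha, rfl⟩

section Pivot

variable {α : Type*}

/-- `x` is a pivot of `(A, B)` if `x ∈ A` and, going around the cyclic order from `x`, one meets
all of `B \ {x}` before any element of `A \ {x}`. In `ℤ/mℤ` a pivot is the last point,
lying in `A`, of an arc that contains `A` and meets `B` at most in that point. -/
def IsPivot [SBtw α] (A B : Finset α) (x : α) : Prop :=
  x ∈ A ∧ ∀ a ∈ A, a ≠ x → ∀ b ∈ B, b ≠ x → sbtw x b a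

theorem IsPivot.eq [CircularPreorder α] {A B : Finset α} {x y : α} (hB : B.Nonempty)
    (hx : IsPivot A B x) (hy : IsPivot A B y) : x = y := by
  by_contra hxy
  obtain ⟨b, hb⟩ := hB
  have hbx : b ≠ x := by
    rintro rfl
    exact sbtw_irrefl_right (hy.2 b hx.1 hxy b hb hxy)
  have hby : b ≠ y := by
    rintro rfl
    exact sbtw_irrefl_right (hx.2 b hy.1 (Ne.symm hxy) b hb (Ne.symm hxy))
  exact sbtw_asymm (hx.2 y hy.1 (Ne.symm hxy) b hb hbx) (hy.2 x hx.1 hxy b hb hby)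

theorem sum_powerset_filter_nonempty_neg_one_pow_card {s : Finset α} (hs : s.Nonempty) :
    ∑ t ∈ s.powerset with t.Nonempty, (-1 : ℤ) ^ t.card = -1 := by
  classical
  have h : {t ∈ s.powerset | t.Nonempty} = s.powerset.erase ∅ := by
    ext t
    simp only [Finset.mem_filter, Finset.mem_erase, Finset.nonempty_iff_ne_empty, and_comm]
  rw [h, Finset.sum_erase_eq_sub (Finset.empty_mem_powerset s),
    Finset.sum_powerset_neg_one_pow_card_of_nonempty hs, Finset.card_empty, pow_zero, zero_sub]

theorem sum_powerset_filter_mem_neg_one_pow_card [DecidableEq α] {s : Finset α}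
    (hs : s.Nontrivial) (x : α) : ∑ t ∈ s.powerset with x ∈ t, (-1 : ℤ) ^ t.card = 0 := by
  have h : {t ∈ s.powerset | x ∉ t} = (s.erase x).powerset := by
    ext t
    simp only [Finset.mem_filter, Finset.mem_powerset, Finset.subset_erase]
  have hsum := Finset.sum_filter_add_sum_filter_not s.powerset (x ∈ ·) fun t => (-1 : ℤ) ^ t.card
  rwa [h, Finset.sum_powerset_neg_one_pow_card_of_nonempty hs.erase_nonempty, add_zero,
    Finset.sum_powerset_neg_one_pow_card_of_nonempty hs.nonempty] at hsum

variable [Fintype α] [Nontrivial α]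

open Classical in
theorem sum_isPivot_neg_one_pow_card [SBtw α] (x : α) :
    ∑ p : Finset α × Finset α with p.2.Nonempty ∧ IsPivot p.1 p.2 x,
      (-1 : ℤ) ^ (p.1.card + p.2.card) = 0 := by
  let allowed (A : Finset α) : Finset α := {b | b = x ∨ ∀ a ∈ A, a ≠ x → sbtw x b a}
  have mem_iff (p : Finset α × Finset α) :
      p ∈ ({p | p.2.Nonempty ∧ IsPivot p.1 p.2 x} : Finset (Finset α × Finset α)) ↔
        p.1 ∈ ({A ∈ Finset.univ.powerset | x ∈ A} : Finset (Finset α)) ∧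
          p.2 ∈ ({B ∈ (allowed p.1).powerset | B.Nonempty} : Finset (Finset α)) := by
    simp only [IsPivot, allowed, Finset.mem_filter, Finset.mem_powerset, Finset.subset_iff,
      Finset.mem_univ]
    grind
  have sum_allowed (A : Finset α) :
      ∑ B ∈ (allowed A).powerset with B.Nonempty, (-1 : ℤ) ^ B.card = -1 :=
    sum_powerset_filter_nonempty_neg_one_pow_card ⟨x, by simp [allowed]⟩
  rw [Finset.sum_finset_product _ (Finset.univ.powerset.filter (x ∈ ·))
    (fun A => (allowed A).powerset.filter Finset.Nonempty) mem_iff]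
  simp only [pow_add, ← Finset.mul_sum, sum_allowed, ← Finset.sum_mul,
    sum_powerset_filter_mem_neg_one_pow_card Finset.univ_nontrivial, zero_mul]

open Classical in
theorem sum_exists_isPivot_neg_one_pow_card [CircularPreorder α] :
    ∑ p : Finset α × Finset α with p.2.Nonempty ∧ ∃ x, IsPivot p.1 p.2 x,
      (-1 : ℤ) ^ (p.1.card + p.2.card) = 0 := by
  have h : ({p | p.2.Nonempty ∧ ∃ x, IsPivot p.1 p.2 x} : Finset (Finset α × Finset α)) =
      Finset.univ.biUnion fun x => {p | p.2.Nonempty ∧ IsPivot p.1 p.2 x} := by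
    ext p
    simp
  rw [h, Finset.sum_biUnion]
  · exact Finset.sum_eq_zero fun x _ => sum_isPivot_neg_one_pow_card x
  · refine fun x _ y _ hxy => Finset.disjoint_left.2 fun p hpx hpy => hxy ?_
    obtain ⟨hB, hx⟩ := (Finset.mem_filter.1 hpx).2
    exact hx.eq hB (Finset.mem_filter.1 hpy).2.2

end Pivot

section ZMod

variable {m : ℕ} [NeZero m]

theorem zmod_sbtw_iff_val {a b c : ZMod m} :
    sbtw a b c ↔ a.val < b.val ∧ b.val < c.val ∨ b.val < c.val ∧ c.val < a.val ∨
      c.val < a.val ∧ a.val < b.val := by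
  obtain ⟨n, rfl⟩ := Nat.exists_eq_succ_of_ne_zero (NeZero.ne m)
  exact Fin.sbtw_iff

theorem zmod_sbtw_iff_val_sub (i : ZMod m) {a b c : ZMod m} :
    sbtw a b c ↔ (a - i).val < (b - i).val ∧ (b - i).val < (c - i).val ∨
      (b - i).val < (c - i).val ∧ (c - i).val < (a - i).val ∨
      (c - i).val < (a - i).val ∧ (a - i).val < (b - i).val := by
  have val_eq (y : ZMod m) : y.val = (y - i).val + i.val ∨ y.val + m = (y - i).val + i.val := by
    rcases lt_or_ge ((y - i).val + i.val) m with h | h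
    · left
      rw [← ZMod.val_add_of_lt h, sub_add_cancel]
    · right
      rw [ZMod.val_add_val_of_le h, sub_add_cancel]
  have val_lt (y : ZMod m) : y.val < m := y.val_lt
  rw [zmod_sbtw_iff_val]
  grind

theorem mem_arc_iff {i y : ZMod m} {ℓ : ℕ} : y ∈ Arc m i ℓ ↔ (y - i).val ≤ ℓ := by
  simp only [Arc, Finset.mem_image, Finset.mem_range, Nat.lt_succ_iff]
  constructor
  · rintro ⟨t, ht, rfl⟩
    rw [add_sub_cancel_left]
    exact (ZMod.val_natCast m t).trans_le ((Nat.mod_le t m).trans ht)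
  · exact fun h => ⟨(y - i).val, h, by rw [ZMod.natCast_zmod_val, add_sub_cancel]⟩

theorem isSemiMixedPair_iff_val_sub {A B : Finset (ZMod m)} :
    IsSemiMixedPair m A B ↔ A.Nonempty ∧ B.Nonempty ∧ ∃ (i : ZMod m) (ℓ : ℕ),
      ℓ ≤ m - 1 ∧ (∀ a ∈ A, (a - i).val ≤ ℓ) ∧ ∀ b ∈ B, ℓ ≤ (b - i).val := by
  have avoid (i : ZMod m) (ℓ : ℕ) :
      B ∩ (if ℓ = 0 then ∅ else Arc m i (ℓ - 1)) = ∅ ↔ ∀ b ∈ B, ℓ ≤ (b - i).val := by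
    split_ifs with hℓ
    · simp only [hℓ, Finset.inter_empty, zero_le, implies_true]
    · rw [← Finset.disjoint_iff_inter_eq_empty, Finset.disjoint_left]
      refine forall₂_congr fun b _ => ?_
      rw [mem_arc_iff]
      omega
  simp only [IsSemiMixedPair, avoid, Finset.subset_iff, mem_arc_iff]

theorem exists_isPivot_of_val_sub_le {A B : Finset (ZMod m)} (hA : A.Nonempty) {i : ZMod m} {ℓ : ℕ}
    (hAℓ : ∀ a ∈ A, (a - i).val ≤ ℓ) (hBℓ : ∀ b ∈ B, ℓ ≤ (b - i).val) : ∃ x, IsPivot A B x := by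
  have val_sub_inj {y z : ZMod m} (h : (y - i).val = (z - i).val) : y = z :=
    sub_left_injective (ZMod.val_injective m h)
  obtain ⟨x, hx, hmax⟩ := A.exists_max_image (fun y => (y - i).val) hA
  refine ⟨x, hx, fun a ha hax b hb hbx => (zmod_sbtw_iff_val_sub i).2 (Or.inr (Or.inr ?_))⟩
  exact ⟨(hmax a ha).lt_of_ne (mt val_sub_inj hax),
    ((hAℓ x hx).trans (hBℓ b hb)).lt_of_ne (mt val_sub_inj hbx.symm)⟩

theorem IsPivot.exists_val_sub_le {A B : Finset (ZMod m)} {x : ZMod m} (hx : IsPivot A B x) :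
    ∃ i, (∀ a ∈ A, (a - i).val ≤ (x - i).val) ∧ ∀ b ∈ B, (x - i).val ≤ (b - i).val := by
  -- The arc starts at the element of `A` lying farthest behind `x`.
  obtain ⟨i, hi, hmax⟩ := A.exists_max_image (fun y => (x - y).val) ⟨x, hx.1⟩
  refine ⟨i, fun a ha => ?_, fun b hb => ?_⟩
  · rw [← sub_sub_sub_cancel_left, ZMod.val_sub (hmax a ha)]
    exact Nat.sub_le _ _
  · rcases eq_or_ne b x with rfl | hbx
    · exact le_rfl
    rcases eq_or_ne i x with rfl | hix
    · rw [sub_self, ZMod.val_zero]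
      exact Nat.zero_le _
    have h := (zmod_sbtw_iff_val_sub i).1 (hx.2 i hi hix b hb hbx)
    rw [sub_self, ZMod.val_zero] at h
    omega

theorem isSemiMixedPair_iff_exists_isPivot {A B : Finset (ZMod m)} :
    IsSemiMixedPair m A B ↔ B.Nonempty ∧ ∃ x, IsPivot A B x := by
  rw [isSemiMixedPair_iff_val_sub]
  constructor
  · rintro ⟨hA, hB, i, ℓ, -, hAℓ, hBℓ⟩
    exact ⟨hB, exists_isPivot_of_val_sub_le hA hAℓ hBℓ⟩
  · rintro ⟨hB, x, hx⟩
    obtain ⟨i, hAi, hBi⟩ := hx.exists_val_sub_le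
    exact ⟨⟨x, hx.1⟩, hB, i, (x - i).val, Nat.le_sub_one_of_lt (x - i).val_lt, hAi, hBi⟩

end ZMod

theorem neg_one_pow_mul_semiMixedCount (m : ℕ) [NeZero m] (u v : ℕ) :
    (-1 : ℤ) ^ (u + v) * (semiMixedCount m u v : ℤ) =
      ∑ᶠ p ∈ {p : Finset (ZMod m) × Finset (ZMod m) |
        IsSemiMixedPair m p.1 p.2 ∧ p.1.card = u ∧ p.2.card = v},
        (-1 : ℤ) ^ (p.1.card + p.2.card) := by
  rw [semiMixedCount, ← finsum_one, Nat.cast_finsum_mem (Set.toFinite _), mul_finsum_mem]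
  refine finsum_mem_congr rfl ?_
  rintro p ⟨-, rfl, rfl⟩
  rw [Nat.cast_one, mul_one]

theorem finsum_isSemiMixedPair_neg_one_pow_card {m : ℕ} (hm : 2 ≤ m) :
    ∑ᶠ p ∈ {p : Finset (ZMod m) × Finset (ZMod m) | IsSemiMixedPair m p.1 p.2},
      (-1 : ℤ) ^ (p.1.card + p.2.card) = 0 := by
  classical
  have : NeZero m := ⟨by omega⟩
  have : Fact (1 < m) := ⟨hm⟩
  rw [← sum_exists_isPivot_neg_one_pow_card (α := ZMod m), ← finsum_mem_coe_finset]
  simp only [isSemiMixedPair_iff_exists_isPivot, Finset.coe_filter, Finset.mem_univ, true_and]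

/-- For `m ≥ 2`, the signed count of all semi-mixed support pairs in `ℤ/mℤ` vanishes:
`∑_{(I_u, I_v) semi-mixed} (−1)^{|I_u| + |I_v|} = 0`; equivalently,
`∑_{u ≥ 1, v ≥ 1} (−1)^{u+v}·C_{u,v}(m) = 0`. -/
theorem semiMixed_signed_count_eq_zero (m : ℕ) (hm : 2 ≤ m) :
    (∑ᶠ p ∈ {p : Finset (ZMod m) × Finset (ZMod m) | IsSemiMixedPair m p.1 p.2},
      (-1 : ℤ) ^ (p.1.card + p.2.card) = 0) ∧
    (∑ᶠ u ∈ {u : ℕ | 1 ≤ u}, ∑ᶠ v ∈ {v : ℕ | 1 ≤ v},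
      (-1 : ℤ) ^ (u + v) * (semiMixedCount m u v : ℤ) = 0) := by
  have : NeZero m := ⟨by omega⟩
  have hsum := finsum_isSemiMixedPair_neg_one_pow_card hm
  refine ⟨hsum, ?_⟩
  let pairs : Set (Finset (ZMod m) × Finset (ZMod m)) := {p | IsSemiMixedPair m p.1 p.2}
  have card_fst_pos : Set.MapsTo (fun p => p.1.card) pairs {u | 1 ≤ u} :=
    fun p hp => hp.1.card_pos
  have card_snd_pos (u : ℕ) :
      Set.MapsTo (fun p => p.2.card) {p ∈ pairs | p.1.card = u} {v | 1 ≤ v} :=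
    fun p hp => hp.1.2.1.card_pos
  rw [← hsum, ← finsum_mem_fiberwise_of_mapsTo (Set.toFinite pairs) card_fst_pos]
  refine finsum_mem_congr rfl fun u _ => ?_
  rw [← finsum_mem_fiberwise_of_mapsTo (Set.toFinite _) (card_snd_pos u)]
  refine finsum_mem_congr rfl fun v _ => ?_
  rw [neg_one_pow_mul_semiMixedCount]
  simp only [pairs, Set.mem_ofPred_eq, and_assoc]
end
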